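/- Let R ⊆ X × Y, S ⊆ Y × Z, T ⊆ Z × X be finite binary relations each of cardinality at most N. Then the number of triples (x,y,z) with (x,y) ∈ R, (y,z) ∈ S, (z,x) ∈ T is at most N^(3/2). -/

import Mathlib

/-- The number of pairs in a finite set lying in the same fibre of `f` is at least
`|s|² / |t|` when `f` maps `s` into `t`. -/
theorem Finset.card_sq_le_card_mul_card_fiber_pairs {α β : Type*} [DecidableEq β]
    {s : Finset α} {t : Finset β} {f : α → β} (h : ∀ a ∈ s, f a ∈ t) :
    s.card ^ 2 ≤ t.card * ((s ×ˢ s).filter fun p => f p.1 = f p.2).card := by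
  have hpairs : ((s ×ˢ s).filter fun p => f p.1 = f p.2).card
      = ∑ b ∈ t, (s.filter fun a => f a = b).card ^ 2 := by
    rw [Finset.card_eq_sum_card_fiberwise (f := fun p : α × α => f p.1) (t := t)]
    · refine Finset.sum_congr rfl fun b _ => ?_
      rw [sq, ← Finset.card_product]
      congr 1
      ext p
      simp only [Finset.mem_filter, Finset.mem_product]
      grind
    · intro p hp
      simp only [Finset.coe_filter, Finset.mem_product, Set.mem_ofPred_eq] at hp
      exact h _ hp.1.1
  rw [hpairs, Finset.card_eq_sum_card_fiberwise (f := f) (t := t) h]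
  exact sq_sum_le_card_mul_sum_sq

/-- The squared size of a finite set of triples is at most the product of the sizes of
finite relations containing its three binary projections. -/
theorem Finset.card_sq_le_of_binary_projections {X Y Z : Type*} {J : Finset (X × Y × Z)}
    {R : Finset (X × Y)} {S : Finset (Y × Z)} {T : Finset (Z × X)}
    (hR : ∀ p ∈ J, (p.1, p.2.1) ∈ R) (hS : ∀ p ∈ J, (p.2.1, p.2.2) ∈ S)
    (hT : ∀ p ∈ J, (p.2.2, p.1) ∈ T) :
    J.card ^ 2 ≤ R.card * (S.card * T.card) := by
  classical
  refine (Finset.card_sq_le_card_mul_card_fiber_pairs hR).trans (Nat.mul_le_mul_left _ ?_)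
  rw [← Finset.card_product]
  refine Finset.card_le_card_of_injOn
    (fun q => ((q.1.2.1, q.1.2.2), (q.2.2.2, q.2.1))) ?_ ?_
  · intro q hq
    simp only [Finset.coe_filter, Finset.mem_product, Set.mem_ofPred_eq] at hq
    exact Finset.mem_product.2 ⟨hS _ hq.1.1, hT _ hq.1.2⟩
  · rintro ⟨⟨x, y, z⟩, x', y', z'⟩ hq ⟨⟨u, v, w⟩, u', v', w'⟩ hq' h
    simp only [Finset.coe_filter, Finset.mem_product, Set.mem_ofPred_eq, Prod.mk.injEq]
      at hq hq' h ⊢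
    grind

/-- AGM bound for the triangle join: if `|R|,|S|,|T| ≤ N`, the number of triples
`(x,y,z)` with `(x,y)∈R`, `(y,z)∈S`, `(z,x)∈T` is at most `N^(3/2)`. -/
theorem stmt5 {X Y Z : Type*} (R : Finset (X × Y)) (S : Finset (Y × Z)) (T : Finset (Z × X))
    (N : ℝ) (hR : (R.card : ℝ) ≤ N) (hS : (S.card : ℝ) ≤ N) (hT : (T.card : ℝ) ≤ N) :
    (({p : X × Y × Z | (p.1, p.2.1) ∈ R ∧ (p.2.1, p.2.2) ∈ S ∧ (p.2.2, p.1) ∈ T}.ncard : ℝ))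
      ≤ N ^ ((3 : ℝ) / 2) := by
  have hN : 0 ≤ N := (Nat.cast_nonneg _).trans hR
  set J := {p : X × Y × Z | (p.1, p.2.1) ∈ R ∧ (p.2.1, p.2.2) ∈ S ∧ (p.2.2, p.1) ∈ T}
  have hfin : J.Finite := by
    refine ((R ×ˢ S).finite_toSet.image fun q => (q.1.1, q.1.2, q.2.2)).subset ?_
    rintro ⟨x, y, z⟩ ⟨hxy, hyz, -⟩
    exact ⟨((x, y), (y, z)), Finset.mem_coe.2 (Finset.mem_product.2 ⟨hxy, hyz⟩), rfl⟩
  have hcard : J.ncard ^ 2 ≤ R.card * (S.card * T.card) := by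
    rw [Set.ncard_eq_toFinset_card J hfin]
    exact Finset.card_sq_le_of_binary_projections
      (fun p hp => (hfin.mem_toFinset.1 hp).1) (fun p hp => (hfin.mem_toFinset.1 hp).2.1)
      (fun p hp => (hfin.mem_toFinset.1 hp).2.2)
  have hpow : (N ^ ((3 : ℝ) / 2)) ^ 2 = N * (N * N) := by
    rw [← Real.rpow_natCast, ← Real.rpow_mul hN]
    norm_num
    ring
  refine le_of_sq_le_sq ?_ (Real.rpow_nonneg hN _)
  rw [hpow]
  calc (J.ncard : ℝ) ^ 2 ≤ R.card * (S.card * T.card) := by exact_mod_cast hcard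
    _ ≤ N * (N * N) := by gcongr
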